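/- arXiv:2505.04796 — 5 statements merged into one kernel-verified Lean document; each statement's English description precedes it below -/
import Mathlib

section
/- Let n ≥ 1 and 0 < δ ≤ τ. In ℝⁿ, let F = {x : x₀ = 0}, let c = δ·e₀, let B = closedBall(c, τ), and let π(x) = x − x₀·e₀ be the orthogonal projection onto F. Then the probability, under the uniform distribution on B, that the projection of a point falls outside B satisfies volume({x ∈ B : π(x) ∉ B}) / volume(B) = 1 − (1/Wₙ)·( ∫₀^{arccos(δ/τ)} sinⁿθ dθ + (δ/τ)·(1 − δ²/τ²)^{(n−1)/2} ), where Wₙ = ∫₀^{π/2} sinⁿθ dθ. -/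
open MeasureTheory Real

lemma slice_vol (m : ℕ) (S : Set (EuclideanSpace ℝ (Fin (m+1)))) (hS : MeasurableSet S) :
    volume S = ∫⁻ t : ℝ, volume {y : EuclideanSpace ℝ (Fin m) |
      (WithLp.toLp 2 (Fin.cons t (fun i => y i) : Fin (m+1) → ℝ) : EuclideanSpace ℝ (Fin (m+1))) ∈ S} := by
  have h2 : MeasurePreserving (Prod.map (id : ℝ → ℝ) (MeasurableEquiv.toLp 2 (Fin m → ℝ)).symm)
      (volume.prod volume) (volume : Measure (ℝ × (Fin m → ℝ))) :=
    (MeasurePreserving.id (volume : Measure ℝ)).prod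
      (EuclideanSpace.volume_preserving_symm_measurableEquiv_toLp (Fin m))
  have h3 : MeasurePreserving (MeasurableEquiv.piFinSuccAbove (fun _ : Fin (m+1) => ℝ) 0).symm
      (volume : Measure (ℝ × (Fin m → ℝ))) volume :=
    (volume_preserving_piFinSuccAbove (fun _ : Fin (m+1) => ℝ) 0).symm
  have h4 := (EuclideanSpace.volume_preserving_symm_measurableEquiv_toLp (Fin (m+1))).symm
  have h5 := h4.comp (h3.comp h2)
  rw [← h5.measure_preimage hS.nullMeasurableSet, Measure.prod_apply (h5.measurable hS)]
  congr 1
  ext t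
  congr 1
  ext y
  simp only [Set.mem_preimage, Set.mem_ofPred_eq, Function.comp, Prod.map]
  have e : (MeasurableEquiv.piFinSuccAbove (fun _ : Fin (m+1) => ℝ) 0).symm
      (id t, (MeasurableEquiv.toLp 2 (Fin m → ℝ)).symm y) = Fin.cons t (fun i => y i) := by
    rw [← Fin.insertNth_zero']
    rfl
  rw [e]
  rfl
lemma subst_int (m : ℕ) (a τ : ℝ) (ha : 0 ≤ a) (hτ : 0 < τ) (haτ : a ≤ τ) :
    ∫ s in a..τ, √(τ^2 - s^2)^m = τ^(m+1) * ∫ θ in (0:ℝ)..(arccos (a/τ)), sin θ ^ (m+1) := by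
  have h := intervalIntegral.integral_comp_mul_deriv (a := 0) (b := arccos (a/τ))
    (f := fun θ => τ * cos θ) (f' := fun θ => - (τ * sin θ)) (g := fun s => √(τ^2 - s^2)^m)
    (fun x _ => by simpa using (hasDerivAt_cos x).const_mul τ) (by fun_prop) (by fun_prop)
  have h1 : a / τ ≤ 1 := (div_le_one hτ).2 haτ
  have h0 : 0 ≤ a / τ := by positivity
  rw [cos_arccos (by linarith) h1, cos_zero, mul_one, mul_div_cancel₀ _ hτ.ne'] at h
  rw [intervalIntegral.integral_symm, ← h, ← intervalIntegral.integral_neg, ← intervalIntegral.integral_const_mul]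
  apply intervalIntegral.integral_congr
  intro θ hθ
  rw [Set.uIcc_of_le (arccos_nonneg _)] at hθ
  have : 0 ≤ sin θ := sin_nonneg_of_nonneg_of_le_pi hθ.1 (hθ.2.trans (arccos_le_pi _))
  have e : τ^2 - (τ * cos θ)^2 = (τ * sin θ)^2 := by rw [mul_pow, mul_pow, cos_sq']; ring
  simp only [Function.comp, e]
  rw [sqrt_sq (by positivity)]
  ring
lemma full_int (m : ℕ) (a τ : ℝ) (ha : 0 ≤ a) (hτ : 0 < τ) (haτ : a ≤ τ) :
    ∫ s in (-τ)..τ, √(τ^2 - max (s^2) (a^2))^m = 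
     2 * τ^(m+1) * ((∫ θ in (0:ℝ)..(arccos (a/τ)), sin θ ^ (m+1)) + (a/τ) * √(1-a^2/τ^2)^m) := by
  have hc : Continuous fun s : ℝ => √(τ^2 - max (s^2) (a^2))^m := by fun_prop
  have e0 : ∫ s in (-τ)..0, √(τ^2 - max (s^2) (a^2))^m = ∫ s in 0..τ, √(τ^2 - max (s^2) (a^2))^m := by
    have := intervalIntegral.integral_comp_neg (a := 0) (b := τ) (fun s => √(τ^2 - max (s^2) (a^2))^m)
    simp only [neg_zero, neg_sq] at this
    exact this.symm
  rw [← intervalIntegral.integral_add_adjacent_intervals (hc.intervalIntegrable _ 0) (hc.intervalIntegrable _ _), e0,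
    ← intervalIntegral.integral_add_adjacent_intervals (hc.intervalIntegrable _ a) (hc.intervalIntegrable _ _)]
  have e1 : ∫ s in 0..a, √(τ^2 - max (s^2) (a^2))^m = ∫ s in 0..a, √(τ^2 - a^2)^m := by
    apply intervalIntegral.integral_congr
    intro s hs
    rw [Set.uIcc_of_le ha] at hs
    simp only
    rw [max_eq_right (by gcongr; exacts [hs.1, hs.2])]
  have e2 : ∫ s in a..τ, √(τ^2 - max (s^2) (a^2))^m = ∫ s in a..τ, √(τ^2 - s^2)^m := by
    apply intervalIntegral.integral_congr
    intro s hs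
    rw [Set.uIcc_of_le haτ] at hs
    simp only
    rw [max_eq_left (by gcongr; exact hs.1)]
  rw [e1, e2, subst_int m a τ ha hτ haτ, intervalIntegral.integral_const]
  have : τ^2 - a^2 = τ^2 * (1 - a^2/τ^2) := by field_simp
  rw [this, sqrt_mul (by positivity), sqrt_sq hτ.le, mul_pow]
  simp only [sub_zero, smul_eq_mul]
  field_simp
  ring

def G (m : ℕ) (δ a τ : ℝ) : Set (EuclideanSpace ℝ (Fin (m+1))) :=
  {x | (x 0 - δ)^2 + ∑ i : Fin m, (x i.succ)^2 ≤ τ^2 ∧ ∑ i : Fin m, (x i.succ)^2 + a^2 ≤ τ^2}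

lemma G_meas (m : ℕ) (δ a τ : ℝ) : MeasurableSet (G m δ a τ) := by
  apply IsClosed.measurableSet
  have h1 : IsClosed {x : EuclideanSpace ℝ (Fin (m+1)) |
      (x 0 - δ)^2 + ∑ i : Fin m, (x i.succ)^2 ≤ τ^2} := isClosed_le (by fun_prop) (by fun_prop)
  have h2 : IsClosed {x : EuclideanSpace ℝ (Fin (m+1)) |
      ∑ i : Fin m, (x i.succ)^2 + a^2 ≤ τ^2} := isClosed_le (by fun_prop) (by fun_prop)
  exact h1.inter h2

lemma G_vol (m : ℕ) (δ a τ : ℝ) (ha : 0 ≤ a) (hτ : 0 < τ) (haτ : a ≤ τ) :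
    volume (G m δ a τ) = ENNReal.ofReal (2 * τ^(m+1) * 
      ((∫ θ in (0:ℝ)..(arccos (a/τ)), sin θ ^ (m+1)) + (a/τ) * √(1-a^2/τ^2)^m)) *
      volume (Metric.ball (0 : EuclideanSpace ℝ (Fin m)) 1) := by
  rw [← full_int m a τ ha hτ haτ, slice_vol _ _ (G_meas m δ a τ)]
  have hc : Continuous fun s : ℝ => √(τ^2 - max (s^2) (a^2))^m := by fun_prop
  have key : ∀ t : ℝ, volume {y : EuclideanSpace ℝ (Fin m) |
      (WithLp.toLp 2 (Fin.cons t (fun i => y i) : Fin (m+1) → ℝ) : EuclideanSpace ℝ (Fin (m+1))) ∈ G m δ a τ}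
      = (Set.Icc (-τ) τ).indicator (fun s => ENNReal.ofReal (√(τ^2 - max (s^2) (a^2))^m)) (t - δ) * 
        volume (Metric.ball (0 : EuclideanSpace ℝ (Fin m)) 1) := by
    intro t
    by_cases ht : t - δ ∈ Set.Icc (-τ) τ
    · rw [Set.indicator_of_mem ht]
      have hs : (t-δ)^2 ≤ τ^2 := sq_le_sq' ht.1 ht.2
      have ha2 : a^2 ≤ τ^2 := by gcongr
      have : {y : EuclideanSpace ℝ (Fin m) |
        (WithLp.toLp 2 (Fin.cons t (fun i => y i) : Fin (m+1) → ℝ) : EuclideanSpace ℝ (Fin (m+1))) ∈ G m δ a τ}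
          = Metric.closedBall 0 (√(τ^2 - max ((t-δ)^2) (a^2))) := by
        ext y
        rw [mem_closedBall_zero_iff, Real.le_sqrt (norm_nonneg _) (by simp [hs, ha2]), EuclideanSpace.real_norm_sq_eq,
          le_sub_comm, max_le_iff]
        simp only [G, Set.mem_ofPred_eq, Fin.cons_zero, Fin.cons_succ]
        constructor <;> rintro ⟨h, h'⟩ <;> constructor <;> linarith
      rw [this, Measure.addHaar_closedBall _ _ (sqrt_nonneg _)]
      simp
    · rw [Set.indicator_of_notMem ht, zero_mul]
      convert measure_empty
      · ext y
        simp only [G, Set.mem_ofPred_eq, Fin.cons_zero, Fin.cons_succ, Set.mem_empty_iff_false, iff_false]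
        rintro ⟨h, -⟩
        have : 0 ≤ ∑ i : Fin m, (y i)^2 := by positivity
        exact ht (abs_le.1 (abs_le_of_sq_le_sq (by linarith) hτ.le))
      · infer_instance
  simp_rw [key]
  rw [lintegral_mul_const _ (by
    apply Measurable.comp (g := (Set.Icc (-τ) τ).indicator (fun s => ENNReal.ofReal (√(τ^2 - max (s^2) (a^2))^m))) _ (by fun_prop)
    exact Measurable.indicator (by fun_prop) measurableSet_Icc)]
  congr 1
  rw [lintegral_sub_right_eq_self (fun t => (Set.Icc (-τ) τ).indicator (fun s => ENNReal.ofReal (√(τ^2 - max (s^2) (a^2))^m)) t),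
    lintegral_indicator measurableSet_Icc, intervalIntegral.integral_of_le (by linarith), ← integral_Icc_eq_integral_Ioc,
    ofReal_integral_eq_lintegral_ofReal hc.continuousOn.integrableOn_Icc]
  exact Filter.Eventually.of_forall fun s => by positivity

/-- Prior-uniform detection rate: with `F = {x : x₀ = 0}`, `c = δ·e₀`,
`B = closedBall(c, τ)` and `π(x) = x − x₀·e₀`, for `0 < δ ≤ τ`,
`volume {x ∈ B : π(x) ∉ B} / volume B
  = 1 − (1/Wₙ)·(∫₀^{arccos(δ/τ)} sinⁿθ dθ + (δ/τ)·(1 − δ²/τ²)^{(n−1)/2})`. -/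
theorem detection_rate_formula {n : ℕ} (hn : 1 ≤ n) (δ τ : ℝ) (hδ : 0 < δ) (hδτ : δ ≤ τ) :
    let e₀ : EuclideanSpace ℝ (Fin n) := EuclideanSpace.single ⟨0, hn⟩ 1
    let c : EuclideanSpace ℝ (Fin n) := δ • e₀
    let B : Set (EuclideanSpace ℝ (Fin n)) := Metric.closedBall c τ
    let proj : EuclideanSpace ℝ (Fin n) → EuclideanSpace ℝ (Fin n) :=
      fun x => x - x ⟨0, hn⟩ • e₀
    let W : ℝ := ∫ θ in (0:ℝ)..(Real.pi / 2), Real.sin θ ^ n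
    (volume {x ∈ B | proj x ∉ B} / volume B).toReal =
      1 - (1 / W) *
        ((∫ θ in (0:ℝ)..(Real.arccos (δ / τ)), Real.sin θ ^ n)
          + (δ / τ) * (1 - δ ^ 2 / τ ^ 2) ^ (((n : ℝ) - 1) / 2)) := by
  obtain ⟨m, rfl⟩ : ∃ m, n = m + 1 := ⟨n - 1, by omega⟩
  intro e₀ c B proj W
  have hτ : 0 < τ := hδ.trans_le hδτ
  have h0 : (⟨0, hn⟩ : Fin (m+1)) = 0 := rfl
  have hB : B = G m δ 0 τ := by
    ext x
    simp only [B, c, e₀, G, h0, mem_closedBall_iff_norm, Set.mem_ofPred_eq]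
    rw [← sq_le_sq₀ (norm_nonneg _) hτ.le, EuclideanSpace.real_norm_sq_eq, Fin.sum_univ_succ]
    simp
    intro h
    nlinarith [sq_nonneg (x 0 - δ)]
  have hA : {x ∈ B | proj x ∉ B} = G m δ 0 τ \ G m δ δ τ := by
    rw [hB]
    ext x
    simp only [Set.mem_sdiff, Set.mem_ofPred_eq]
    apply and_congr_right
    intro hx
    apply not_congr
    simp only [proj, e₀, G, h0, Set.mem_ofPred_eq] at hx ⊢
    simp
    constructor
    · rintro ⟨h, h'⟩
      exact ⟨hx.1, by linarith⟩
    · rintro ⟨h, h'⟩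
      exact ⟨by linarith, by nlinarith⟩
  have hsub : G m δ δ τ ⊆ G m δ 0 τ := fun x hx => ⟨hx.1, by have := hx.2; nlinarith⟩
  have hWpos : 0 < W := by
    apply intervalIntegral.intervalIntegral_pos_of_pos_on
    · exact (by fun_prop : Continuous fun θ : ℝ => sin θ ^ (m+1)).intervalIntegrable _ _
    · intro x hx
      exact pow_pos (sin_pos_of_pos_of_lt_pi hx.1 (by linarith [hx.2, pi_pos])) _
    · positivity
  have hball0 : volume (Metric.ball (0 : EuclideanSpace ℝ (Fin m)) 1) ≠ 0 := (Metric.measure_ball_pos _ _ one_pos).ne'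
  have hball1 : volume (Metric.ball (0 : EuclideanSpace ℝ (Fin m)) 1) ≠ ⊤ := measure_ball_lt_top.ne
  have v0 := G_vol m δ 0 τ le_rfl hτ hτ.le
  have v1 := G_vol m δ δ τ hδ.le hτ hδτ
  have hrt : √(1-δ^2/τ^2)^m = (1 - δ ^ 2 / τ ^ 2) ^ ((((m+1 : ℕ) : ℝ) - 1) / 2) := by
    have : 0 ≤ 1 - δ^2/τ^2 := by
      rw [sub_nonneg, div_le_one (by positivity)]; gcongr
    rw [sqrt_eq_rpow, ← rpow_natCast, ← rpow_mul this]
    congr 1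
    push_cast
    ring
  rw [hrt] at v1
  simp only [zero_div, arccos_zero, zero_mul, add_zero] at v0
  have hI : 0 ≤ ∫ θ in (0:ℝ)..(arccos (δ/τ)), sin θ ^ (m+1) := by
    apply intervalIntegral.integral_nonneg (arccos_nonneg _)
    intro θ hθ
    exact pow_nonneg (sin_nonneg_of_nonneg_of_le_pi hθ.1 (hθ.2.trans (arccos_le_pi _))) _
  have hR : 0 ≤ (1 - δ ^ 2 / τ ^ 2) ^ ((((m+1 : ℕ) : ℝ) - 1) / 2) := by rw [← hrt]; positivity
  rw [hA, hB, ENNReal.toReal_div, measure_sdiff hsub (G_meas ..).nullMeasurableSet (by rw [v1]; finiteness),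
    ENNReal.toReal_sub_of_le (measure_mono hsub) (by rw [v0]; finiteness), v0, v1,
    ENNReal.toReal_mul, ENNReal.toReal_mul, ENNReal.toReal_ofReal (by positivity),
    ENNReal.toReal_ofReal (by positivity)]
  have hk : 0 < (volume (Metric.ball (0 : EuclideanSpace ℝ (Fin m)) 1)).toReal := ENNReal.toReal_pos hball0 hball1
  change (2 * τ^(m+1) * W * _ - _) / (2 * τ^(m+1) * W * _) = _
  generalize (volume (Metric.ball (0 : EuclideanSpace ℝ (Fin m)) 1)).toReal = k at *
  generalize (∫ θ in (0:ℝ)..(arccos (δ/τ)), sin θ ^ (m+1)) = I at *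
  generalize (1 - δ ^ 2 / τ ^ 2) ^ ((((m+1 : ℕ) : ℝ) - 1) / 2) = R at *
  clear_value W
  field_simp
end

section
/- Let n ≥ 1 and 0 < δ ≤ τ. In ℝⁿ, let F = {x : x₀ = 0}, c = δ·e₀, B = closedBall(c, τ), and π(x) = x − x₀·e₀. Then volume({x ∈ B : π(x) ∉ B}) / volume(B) = (1/Wₙ)·( ∫₀^{δ/τ} (1 − u²)^{(n−1)/2} du − (δ/τ)·(1 − δ²/τ²)^{(n−1)/2} ), where Wₙ = ∫₀^{π/2} sinⁿθ dθ. -/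
open MeasureTheory Real

namespace DetAux

lemma vol_sq_le (m : ℕ) (r : ℝ) (hr : 0 ≤ r) :
    volume {y : Fin m → ℝ | ∑ i, y i ^ 2 ≤ r ^ 2} =
      volume (Metric.closedBall (0 : EuclideanSpace ℝ (Fin m)) 1) * ENNReal.ofReal (r ^ m) := by
  have h := (PiLp.volume_preserving_toLp (Fin m)).measure_preimage
    (s := Metric.closedBall (0 : EuclideanSpace ℝ (Fin m)) r)
    Metric.isClosed_closedBall.measurableSet.nullMeasurableSet
  rw [Measure.addHaar_closedBall' _ _ hr, finrank_euclideanSpace_fin, mul_comm] at h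
  rw [← h]
  congr 1
  ext y
  simp only [Set.mem_ofPred_eq, Set.mem_preimage, mem_closedBall_zero_iff]
  rw [← sq_le_sq₀ (norm_nonneg _) hr, EuclideanSpace.real_norm_sq_eq]

lemma vol_sq_le' (m : ℕ) (R : ℝ) (hR : 0 ≤ R) :
    volume {y : Fin m → ℝ | ∑ i, y i ^ 2 ≤ R} =
      volume (Metric.closedBall (0 : EuclideanSpace ℝ (Fin m)) 1) * ENNReal.ofReal (√R ^ m) := by
  rw [← vol_sq_le m _ (Real.sqrt_nonneg R), Real.sq_sqrt hR]

lemma vol_lt_sq_le (m : ℕ) (Q R : ℝ) (hQ : 0 ≤ Q) (hR : Q ≤ R) :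
    volume {y : Fin m → ℝ | ∑ i, y i ^ 2 ≤ R ∧ Q < ∑ i, y i ^ 2} =
      volume (Metric.closedBall (0 : EuclideanSpace ℝ (Fin m)) 1) *
        ENNReal.ofReal (√R ^ m - √Q ^ m) := by
  have : {y : Fin m → ℝ | ∑ i, y i ^ 2 ≤ R ∧ Q < ∑ i, y i ^ 2} =
      {y : Fin m → ℝ | ∑ i, y i ^ 2 ≤ R} \ {y : Fin m → ℝ | ∑ i, y i ^ 2 ≤ Q} := by
    ext y; simp
  have hfin : volume (Metric.closedBall (0 : EuclideanSpace ℝ (Fin m)) 1) ≠ ⊤ :=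
    measure_closedBall_lt_top.ne
  rw [this, measure_sdiff, vol_sq_le' m R (hQ.trans hR), vol_sq_le' m Q hQ,
    ENNReal.ofReal_sub _ (by positivity), ENNReal.mul_sub (fun _ _ => hfin)]
  · intro y hy
    exact le_trans hy hR
  · apply MeasurableSet.nullMeasurableSet
    apply measurableSet_le <;> fun_prop
  · rw [vol_sq_le' m Q hQ]
    exact ENNReal.mul_ne_top hfin ENNReal.ofReal_ne_top

lemma vol_prod (m : ℕ) (δ a : ℝ) (ha : 0 ≤ a) (V : ENNReal) (hV : V ≠ ⊤)
    (S : Set (ℝ × (Fin m → ℝ))) (hS : MeasurableSet S)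
    (f : ℝ → ℝ) (hf : Continuous f) (heven : ∀ s, f (-s) = f s)
    (hnn : ∀ s, |s| ≤ a → 0 ≤ f s)
    (h1 : ∀ s, |s| ≤ a → volume {y | (s + δ, y) ∈ S} = V * ENNReal.ofReal (f s))
    (h2 : ∀ s, a < |s| → volume {y | (s + δ, y) ∈ S} = 0) :
    volume S = V * ENNReal.ofReal (2 * ∫ s in (0:ℝ)..a, f s) := by
  rw [Measure.volume_eq_prod, Measure.prod_apply hS,
    ← lintegral_add_right_eq_self _ δ]
  have : ∀ s : ℝ, volume (Prod.mk (s + δ) ⁻¹' S) =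
      (Set.Icc (-a) a).indicator (fun s => V * ENNReal.ofReal (f s)) s := by
    intro s
    by_cases hs : |s| ≤ a
    · rw [Set.indicator_of_mem (by rwa [Set.mem_Icc, ← abs_le])]
      exact h1 s hs
    · rw [Set.indicator_of_notMem (by rwa [Set.mem_Icc, ← abs_le])]
      exact h2 s (not_le.mp hs)
  simp_rw [this]
  rw [lintegral_indicator measurableSet_Icc, lintegral_const_mul' _ _ hV,
    ← ofReal_integral_eq_lintegral_ofReal]
  · congr 2
    rw [integral_Icc_eq_integral_Ioc, ← intervalIntegral.integral_of_le (by linarith),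
      ← intervalIntegral.integral_add_adjacent_intervals (b := 0)
        (hf.intervalIntegrable _ _) (hf.intervalIntegrable _ _)]
    have : ∫ s in (-a)..0, f s = ∫ s in (0:ℝ)..a, f s := by
      have := intervalIntegral.integral_comp_neg (a := 0) (b := a) f
      simp only [heven, neg_zero] at this
      exact this.symm
    rw [this]; ring
  · exact hf.continuousOn.integrableOn_Icc
  · filter_upwards [ae_restrict_mem measurableSet_Icc] with s hs
    exact hnn s (abs_le.mpr hs)

lemma W_eq (m : ℕ) : ∫ θ in (0:ℝ)..(Real.pi / 2), Real.sin θ ^ (m + 1) =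
    ∫ u in (0:ℝ)..1, √(1 - u ^ 2) ^ m := by
  have h := intervalIntegral.integral_comp_mul_deriv (a := 0) (b := Real.pi / 2)
    (f := Real.cos) (f' := fun x => - Real.sin x) (g := fun u => √(1 - u ^ 2) ^ m)
    (fun x _ => Real.hasDerivAt_cos x) (by fun_prop) (by fun_prop)
  rw [Real.cos_zero, Real.cos_pi_div_two, intervalIntegral.integral_symm 0 1] at h
  rw [← neg_inj, ← h, ← intervalIntegral.integral_neg]
  apply intervalIntegral.integral_congr
  intro x hx
  rw [Set.uIcc_of_le (by positivity)] at hx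
  have hs : 0 ≤ Real.sin x := Real.sin_nonneg_of_nonneg_of_le_pi hx.1 (by linarith [hx.2, Real.pi_pos])
  have : √(1 - Real.cos x ^ 2) = Real.sin x := by
    rw [← Real.sin_sq, Real.sqrt_sq hs]
  simp only [Function.comp, this]
  ring

lemma scale (m : ℕ) (τ b : ℝ) (hτ : 0 < τ) :
    ∫ s in (0:ℝ)..b, √(τ ^ 2 - s ^ 2) ^ m =
      τ ^ (m + 1) * ∫ u in (0:ℝ)..(b / τ), √(1 - u ^ 2) ^ m := by
  have h := intervalIntegral.mul_integral_comp_mul_left (a := 0) (b := b / τ)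
    (f := fun s => √(τ ^ 2 - s ^ 2) ^ m) (c := τ)
  rw [mul_zero, mul_div_cancel₀ _ hτ.ne'] at h
  rw [← h, pow_succ' τ m, mul_assoc, ← intervalIntegral.integral_const_mul (τ ^ m)]
  congr 2
  ext u
  rw [show τ ^ 2 - (τ * u) ^ 2 = τ ^ 2 * (1 - u ^ 2) by ring, Real.sqrt_mul (by positivity),
    Real.sqrt_sq hτ.le, mul_pow]

lemma mem_ball_iff (m : ℕ) (δ τ : ℝ) (hτ : 0 ≤ τ) (x : EuclideanSpace ℝ (Fin (m + 1))) :
    x ∈ Metric.closedBall (δ • (EuclideanSpace.single 0 1 : EuclideanSpace ℝ (Fin (m + 1)))) τ ↔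
      (x 0 - δ) ^ 2 + ∑ i : Fin m, x i.succ ^ 2 ≤ τ ^ 2 := by
  rw [Metric.mem_closedBall, dist_eq_norm, ← sq_le_sq₀ (norm_nonneg _) hτ,
    EuclideanSpace.real_norm_sq_eq, Fin.sum_univ_succ]
  simp

lemma rp (m : ℕ) (x : ℝ) (hx : 0 ≤ x) :
    x ^ ((((m + 1 : ℕ) : ℝ) - 1) / 2) = √x ^ m := by
  rw [Real.rpow_div_two_eq_sqrt _ hx]
  simp

end DetAux



/-- Prior-uniform detection rate, alternative form: with `F = {x : x₀ = 0}`,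
`c = δ·e₀`, `B = closedBall(c, τ)` and `π(x) = x − x₀·e₀`, for `0 < δ ≤ τ`,
`volume {x ∈ B : π(x) ∉ B} / volume B
  = (1/Wₙ)·(∫₀^{δ/τ} (1 − u²)^{(n−1)/2} du − (δ/τ)·(1 − δ²/τ²)^{(n−1)/2})`. -/
theorem detection_rate_formula' {n : ℕ} (hn : 1 ≤ n) (δ τ : ℝ) (hδ : 0 < δ) (hδτ : δ ≤ τ) :
    let e₀ : EuclideanSpace ℝ (Fin n) := EuclideanSpace.single ⟨0, hn⟩ 1
    let c : EuclideanSpace ℝ (Fin n) := δ • e₀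
    let B : Set (EuclideanSpace ℝ (Fin n)) := Metric.closedBall c τ
    let proj : EuclideanSpace ℝ (Fin n) → EuclideanSpace ℝ (Fin n) :=
      fun x => x - x ⟨0, hn⟩ • e₀
    let W : ℝ := ∫ θ in (0:ℝ)..(Real.pi / 2), Real.sin θ ^ n
    (volume {x ∈ B | proj x ∉ B} / volume B).toReal =
      (1 / W) *
        ((∫ u in (0:ℝ)..(δ / τ), (1 - u ^ 2) ^ (((n : ℝ) - 1) / 2))
          - (δ / τ) * (1 - δ ^ 2 / τ ^ 2) ^ (((n : ℝ) - 1) / 2)) := by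
  obtain ⟨m, rfl⟩ : ∃ m, n = m + 1 := ⟨n - 1, by omega⟩
  intro e₀ c B proj W
  have hτ : 0 < τ := hδ.trans_le hδτ
  have hsq : δ ^ 2 ≤ τ ^ 2 := by gcongr
  set V := volume (Metric.closedBall (0 : EuclideanSpace ℝ (Fin m)) 1) with hVdef
  have hV : V ≠ ⊤ := measure_closedBall_lt_top.ne
  have hV0 : V ≠ 0 := (Metric.measure_closedBall_pos _ _ one_pos).ne'
  let SB : Set (ℝ × (Fin m → ℝ)) := {p | (p.1 - δ) ^ 2 + ∑ i, p.2 i ^ 2 ≤ τ ^ 2}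
  let SA : Set (ℝ × (Fin m → ℝ)) :=
    {p | (p.1 - δ) ^ 2 + ∑ i, p.2 i ^ 2 ≤ τ ^ 2 ∧ τ ^ 2 < δ ^ 2 + ∑ i, p.2 i ^ 2}
  have hSB : MeasurableSet SB := by
    apply measurableSet_le <;> fun_prop
  have hSA : MeasurableSet SA := by
    have h2 : MeasurableSet {p : ℝ × (Fin m → ℝ) | τ ^ 2 < δ ^ 2 + ∑ i, p.2 i ^ 2} := by
      apply measurableSet_lt <;> fun_prop
    exact hSB.inter h2
  have mp := (volume_preserving_piFinSuccAbove (fun _ : Fin (m + 1) => ℝ) 0).comp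
    (PiLp.volume_preserving_ofLp (Fin (m + 1)))
  have hB : volume B = volume SB := by
    rw [← mp.measure_preimage hSB.nullMeasurableSet]
    congr 1
    ext x
    exact DetAux.mem_ball_iff m δ τ hτ.le x
  have hA : volume {x ∈ B | proj x ∉ B} = volume SA := by
    rw [← mp.measure_preimage hSA.nullMeasurableSet]
    congr 1
    ext x
    have h1 := DetAux.mem_ball_iff m δ τ hτ.le x
    have h2 := DetAux.mem_ball_iff m δ τ hτ.le (proj x)
    have h3 : proj x 0 = 0 := by
      simp [proj, e₀]
    have h4 : ∀ i : Fin m, proj x i.succ = x i.succ := by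
      intro i
      simp [proj, e₀]
    simp only [h3, h4, zero_sub, neg_sq] at h2
    exact and_congr h1 ((not_congr h2).trans not_le)
  have vB : volume SB = V * ENNReal.ofReal (2 * ∫ s in (0:ℝ)..τ, √(τ ^ 2 - s ^ 2) ^ m) := by
    apply DetAux.vol_prod m δ τ hτ.le V hV SB hSB
    · fun_prop
    · simp
    · intros; positivity
    · intro s hs
      have : s ^ 2 ≤ τ ^ 2 := by rw [← sq_abs s]; gcongr
      rw [← DetAux.vol_sq_le' m _ (by linarith)]
      congr 1
      ext y
      simp only [SB, Set.mem_ofPred_eq, add_sub_cancel_right]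
      constructor <;> intro h <;> linarith
    · intro s hs
      have : τ ^ 2 < s ^ 2 := by rw [← sq_abs s]; gcongr
      convert measure_empty (μ := volume)
      ext y
      have : 0 ≤ ∑ i, y i ^ 2 := by positivity
      simp only [SB, Set.mem_ofPred_eq, add_sub_cancel_right, Set.mem_empty_iff_false, iff_false]
      linarith
  have vA : volume SA = V * ENNReal.ofReal
      (2 * ∫ s in (0:ℝ)..δ, (√(τ ^ 2 - s ^ 2) ^ m - √(τ ^ 2 - δ ^ 2) ^ m)) := by
    apply DetAux.vol_prod m δ δ hδ.le V hV SA hSA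
    · fun_prop
    · simp
    · intro s hs
      have : s ^ 2 ≤ δ ^ 2 := by rw [← sq_abs s]; gcongr
      rw [sub_nonneg]
      gcongr
    · intro s hs
      have : s ^ 2 ≤ δ ^ 2 := by rw [← sq_abs s]; gcongr
      rw [← DetAux.vol_lt_sq_le m _ _ (by linarith) (by linarith)]
      congr 1
      ext y
      simp only [SA, Set.mem_ofPred_eq, add_sub_cancel_right]
      constructor <;> rintro ⟨h, h'⟩ <;> constructor <;> linarith
    · intro s hs
      have : δ ^ 2 < s ^ 2 := by rw [← sq_abs s]; gcongr
      convert measure_empty (μ := volume)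
      ext y
      simp only [SA, Set.mem_ofPred_eq, add_sub_cancel_right, Set.mem_empty_iff_false, iff_false,
        not_and, not_lt]
      intro h
      linarith
  have hW : W = ∫ u in (0:ℝ)..1, √(1 - u ^ 2) ^ m := DetAux.W_eq m
  have hWpos : 0 < W := by
    apply intervalIntegral.intervalIntegral_pos_of_pos_on
    · exact Continuous.intervalIntegrable (by fun_prop) _ _
    · intro x hx
      exact pow_pos (Real.sin_pos_of_pos_of_lt_pi hx.1 (by linarith [hx.2, Real.pi_pos])) _
    · positivity
  have hAnn : 0 ≤ ∫ s in (0:ℝ)..δ, (√(τ ^ 2 - s ^ 2) ^ m - √(τ ^ 2 - δ ^ 2) ^ m) := by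
    apply intervalIntegral.integral_nonneg hδ.le
    intro s hs
    have h0 := hs.1
    have h1 := hs.2
    rw [sub_nonneg]
    gcongr
  have hr1 : δ / τ ≤ 1 := (div_le_one hτ).mpr hδτ
  have hr0 : 0 < δ / τ := by positivity
  have hI : ∫ u in (0:ℝ)..(δ / τ), (1 - u ^ 2) ^ ((((m + 1 : ℕ) : ℝ) - 1) / 2) =
      ∫ u in (0:ℝ)..(δ / τ), √(1 - u ^ 2) ^ m := by
    apply intervalIntegral.integral_congr
    intro u hu
    rw [Set.uIcc_of_le hr0.le] at hu
    apply DetAux.rp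
    nlinarith [hu.1, hu.2]
  have hK : √(τ ^ 2 - δ ^ 2) ^ m = τ ^ m * √(1 - δ ^ 2 / τ ^ 2) ^ m := by
    rw [show τ ^ 2 - δ ^ 2 = τ ^ 2 * (1 - δ ^ 2 / τ ^ 2) by field_simp,
      Real.sqrt_mul (by positivity), Real.sqrt_sq hτ.le, mul_pow]
  have hd : 0 ≤ 1 - δ ^ 2 / τ ^ 2 := by
    rw [sub_nonneg, div_le_one (by positivity)]
    exact hsq
  rw [hA, hB, vA, vB, ENNReal.mul_div_mul_left _ _ hV0 hV, ENNReal.toReal_div,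
    ENNReal.toReal_ofReal (by positivity), DetAux.scale m τ τ hτ, div_self hτ.ne', ← hW,
    ENNReal.toReal_ofReal (by positivity), hI, DetAux.rp m _ hd,
    intervalIntegral.integral_sub (Continuous.intervalIntegrable (by fun_prop) _ _)
      (Continuous.intervalIntegrable (by fun_prop) _ _), DetAux.scale m τ δ hτ, hK,
    intervalIntegral.integral_const, smul_eq_mul, sub_zero]
  generalize ∫ u in (0:ℝ)..(δ / τ), √(1 - u ^ 2) ^ m = J
  generalize √(1 - δ ^ 2 / τ ^ 2) ^ m = K
  field_simp
  ring
end

section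
/- Let n ≥ 2 and τ > 0. In ℝⁿ, let F = {x : x₀ = 0}, c = τ·e₀ (so the closed ball B = closedBall(c, τ) is tangent to F), and π(x) = x − x₀·e₀. Then volume({x ∈ B : π(x) ∈ B}) = 0; equivalently, the detection probability volume({x ∈ B : π(x) ∉ B}) / volume(B) equals 1. That is, when the expectability threshold τ equals the distance δ of the ball's center to the fair hyperplane, the auditor detects a manipulating platform with probability one. -/
open MeasureTheory Real

/-- Tangent case `τ = δ`: when `B = closedBall(τ·e₀, τ)` is tangent to the fair
hyperplane `{x : x₀ = 0}`, the undetected region has measure zero and the detection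
probability is one. -/
theorem detection_rate_one_of_tangent {n : ℕ} (hn : 2 ≤ n) (τ : ℝ) (hτ : 0 < τ) :
    let e₀ : EuclideanSpace ℝ (Fin n) := EuclideanSpace.single ⟨0, Nat.lt_of_lt_of_le Nat.zero_lt_two hn⟩ 1
    let c : EuclideanSpace ℝ (Fin n) := τ • e₀
    let B : Set (EuclideanSpace ℝ (Fin n)) := Metric.closedBall c τ
    let proj : EuclideanSpace ℝ (Fin n) → EuclideanSpace ℝ (Fin n) :=
      fun x => x - x ⟨0, Nat.lt_of_lt_of_le Nat.zero_lt_two hn⟩ • e₀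
    volume {x ∈ B | proj x ∈ B} = 0 ∧
    volume {x ∈ B | proj x ∉ B} / volume B = 1 := by
  intro e₀ c B proj
  have hz : volume {x ∈ B | proj x ∈ B} = 0 := by
    let i0 : Fin n := ⟨0, Nat.lt_of_lt_of_le Nat.zero_lt_two hn⟩
    let i1 : Fin n := ⟨1, hn⟩
    have hne : i0 ≠ i1 := by simp [i0, i1]
    let S : Submodule ℝ (EuclideanSpace ℝ (Fin n)) :=
      LinearMap.ker (EuclideanSpace.proj i1 : EuclideanSpace ℝ (Fin n) →L[ℝ] ℝ).toLinearMap
    have hS : S ≠ ⊤ := by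
      intro h
      have h1 : EuclideanSpace.single i1 (1 : ℝ) ∈ S := by rw [h]; trivial
      simp [S] at h1
    refine measure_mono_null ?_ (Measure.addHaar_submodule volume S hS)
    rintro x ⟨-, hx⟩
    have hd : ‖proj x - c‖ ≤ τ := by simpa [B, dist_eq_norm] using hx
    have hsq : ‖proj x - c‖ ^ 2 ≤ τ ^ 2 := by gcongr
    rw [EuclideanSpace.norm_sq_eq] at hsq
    have hsub : ∑ i ∈ ({i0, i1} : Finset (Fin n)), ‖(proj x - c) i‖ ^ 2
        ≤ ∑ i, ‖(proj x - c) i‖ ^ 2 :=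
      Finset.sum_le_sum_of_subset_of_nonneg (Finset.subset_univ _)
        (fun _ _ _ => by positivity)
    rw [Finset.sum_pair hne] at hsub
    have h0 : (proj x - c) i0 = -τ := by simp [proj, c, e₀, i0]
    have h1 : (proj x - c) i1 = x i1 := by simp [proj, c, e₀, i1]
    rw [h0, h1] at hsub
    simp only [Real.norm_eq_abs, sq_abs] at hsub hsq
    have hx1 : x i1 = 0 := by
      have : (x i1) ^ 2 = 0 := by nlinarith [sq_nonneg (x i1)]
      simpa using this
    simpa [S] using hx1
  refine ⟨hz, ?_⟩
  have hB0 : volume B ≠ 0 := (Metric.measure_closedBall_pos volume c hτ).ne'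
  have hBt : volume B ≠ ⊤ := measure_closedBall_lt_top.ne
  have hE : {x ∈ B | proj x ∉ B} = B \ {x ∈ B | proj x ∈ B} := by
    ext x
    simp only [Set.mem_ofPred_eq, Set.mem_sdiff]
    tauto
  rw [hE, measure_sdiff_null hz]
  exact ENNReal.div_self hB0 hBt
end

section
/- Let n ≥ 2 and 0 < δ ≤ τ. In ℝⁿ, let F = {x : x₀ = 0}, c = δ·e₀, B = closedBall(c, τ), and π(x) = x − x₀·e₀. Then volume({x ∈ B : π(x) ∉ B}) > 0; that is, whenever the ball's center is at strictly positive distance δ from the fair hyperplane, the auditor detects a manipulating platform with strictly positive probability. -/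
open MeasureTheory Real

/-- Strictly positive detection probability: for `n ≥ 2` and `0 < δ ≤ τ`, with
`c = δ·e₀`, `B = closedBall(c, τ)` and `π(x) = x − x₀·e₀`, the detection region
`{x ∈ B : π(x) ∉ B}` has strictly positive volume. -/
theorem detection_rate_pos {n : ℕ} (hn : 2 ≤ n) (δ τ : ℝ) (hδ : 0 < δ) (hδτ : δ ≤ τ) :
    let e₀ : EuclideanSpace ℝ (Fin n) := EuclideanSpace.single ⟨0, Nat.lt_of_lt_of_le Nat.zero_lt_two hn⟩ 1
    let c : EuclideanSpace ℝ (Fin n) := δ • e₀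
    let B : Set (EuclideanSpace ℝ (Fin n)) := Metric.closedBall c τ
    let proj : EuclideanSpace ℝ (Fin n) → EuclideanSpace ℝ (Fin n) :=
      fun x => x - x ⟨0, Nat.lt_of_lt_of_le Nat.zero_lt_two hn⟩ • e₀
    0 < volume {x ∈ B | proj x ∉ B} := by
  intro e₀ c B proj
  set i0 : Fin n := ⟨0, Nat.lt_of_lt_of_le Nat.zero_lt_two hn⟩ with hi0
  let i1 : Fin n := ⟨1, Nat.lt_of_lt_of_le Nat.one_lt_two hn⟩
  have h01 : i0 ≠ i1 := by simp [i1, hi0]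
  let e₁ : EuclideanSpace ℝ (Fin n) := EuclideanSpace.single i1 1
  have hτ : 0 < τ := lt_of_lt_of_le hδ hδτ
  have hcont : Continuous proj := by
    have : Continuous fun x : EuclideanSpace ℝ (Fin n) => x i0 := by fun_prop
    exact continuous_id.sub (this.smul continuous_const)
  have hopen : IsOpen (Metric.ball c τ ∩ proj ⁻¹' Bᶜ) :=
    Metric.isOpen_ball.inter (Metric.isClosed_closedBall.isOpen_compl.preimage hcont)
  have hsq : 0 ≤ τ ^ 2 - δ ^ 2 / 2 := by nlinarith
  obtain ⟨s, hs0, hs⟩ : ∃ s : ℝ, 0 ≤ s ∧ s ^ 2 = τ ^ 2 - δ ^ 2 / 2 :=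
    ⟨√(τ ^ 2 - δ ^ 2 / 2), Real.sqrt_nonneg _, Real.sq_sqrt hsq⟩
  have hsτ : s < τ := by
    apply lt_of_pow_lt_pow_left₀ 2 hτ.le
    nlinarith
  have n0 : ‖e₀‖ = 1 := by simp [e₀]
  have n1 : ‖e₁‖ = 1 := by simp [e₁]
  have hin : inner ℝ e₁ e₀ = (0 : ℝ) := by
    change inner ℝ (EuclideanSpace.single i1 (1 : ℝ)) (EuclideanSpace.single i0 (1 : ℝ)) = (0 : ℝ)
    rw [EuclideanSpace.inner_single_left]
    simp [h01.symm]
  have hne : (Metric.ball c τ ∩ proj ⁻¹' Bᶜ).Nonempty := by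
    refine ⟨c + s • e₁, ?_, ?_⟩
    · rw [Metric.mem_ball, dist_eq_norm, add_sub_cancel_left, norm_smul, n1, mul_one,
        Real.norm_of_nonneg hs0]
      exact hsτ
    · have hx : (c + s • e₁) i0 = δ := by
        simp [c, e₀, e₁, h01, ← hi0]
      have hp : proj (c + s • e₁) = s • e₁ := by
        change (c + s • e₁) - (c + s • e₁) i0 • e₀ = _
        rw [hx]
        exact add_sub_cancel_left _ _
      intro hmem
      rw [hp] at hmem
      have hle : ‖s • e₁ - δ • e₀‖ ≤ τ := by
        rw [← dist_eq_norm]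
        exact hmem
      have hnorm : ‖s • e₁ - δ • e₀‖ ^ 2 = s ^ 2 + δ ^ 2 := by
        rw [norm_sub_sq_real, inner_smul_left, inner_smul_right, hin, norm_smul, norm_smul,
          n0, n1]
        simp
      have := pow_le_pow_left₀ (norm_nonneg _) hle 2
      nlinarith
  refine lt_of_lt_of_le (hopen.measure_pos volume hne) (measure_mono ?_)
  rintro x ⟨h1, h2⟩
  exact ⟨Metric.ball_subset_closedBall h1, h2⟩
end

section
/- Let n ≥ 1, τ > 0 and 0 ≤ δ ≤ τ. The Lebesgue volume of the spherical cap {x ∈ ℝⁿ : ‖x‖ ≤ τ and x₀ ≥ δ} equals ( π^{(n−1)/2} · τⁿ / Γ((n+1)/2) ) · ∫₀^{arccos(δ/τ)} sinⁿθ dθ. -/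
open MeasureTheory Real

lemma ball_slice (m : ℕ) (r : ℝ) (hr : 0 ≤ r) :
    volume {z : Fin m → ℝ | ∑ i, z i ^ 2 ≤ r ^ 2} =
      ENNReal.ofReal (r ^ m * (Real.sqrt π ^ m / Real.Gamma ((m:ℝ) / 2 + 1))) := by
  rcases Nat.eq_zero_or_pos m with rfl | hm
  · have : {z : Fin 0 → ℝ | ∑ i, z i ^ 2 ≤ r ^ 2} = Set.univ := by
      ext z; simp; positivity
    rw [this]
    rw [volume_pi, Measure.pi_univ]
    simp [Real.Gamma_one]
  · have : Nonempty (Fin m) := ⟨⟨0, hm⟩⟩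
    have h := EuclideanSpace.volume_closedBall (Fin m) (0 : EuclideanSpace ℝ (Fin m)) r
    rw [← (PiLp.volume_preserving_toLp (Fin m)).measure_preimage
      measurableSet_closedBall.nullMeasurableSet] at h
    have e : (WithLp.toLp 2) ⁻¹' (Metric.closedBall (0 : EuclideanSpace ℝ (Fin m)) r) =
        {z : Fin m → ℝ | ∑ i, z i ^ 2 ≤ r ^ 2} := by
      ext z
      simp [EuclideanSpace.norm_eq, Real.sqrt_le_left hr]
    rw [e] at h
    rw [h, ← ENNReal.ofReal_pow hr, ← ENNReal.ofReal_mul (by positivity)]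
    simp

lemma cap_integral (m : ℕ) (δ τ : ℝ) (hτ : 0 < τ) (hδ : 0 ≤ δ) (hδτ : δ ≤ τ) :
    ∫ t in δ..τ, Real.sqrt (τ ^ 2 - t ^ 2) ^ m =
      τ ^ (m + 1) * ∫ θ in (0:ℝ)..(Real.arccos (δ / τ)), Real.sin θ ^ (m + 1) := by
  have h := intervalIntegral.integral_comp_mul_deriv (a := 0) (b := Real.arccos (δ / τ))
    (f := fun θ => τ * Real.cos θ) (f' := fun θ => τ * (- Real.sin θ))
    (g := fun t => Real.sqrt (τ ^ 2 - t ^ 2) ^ m)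
    (fun θ _ => (Real.hasDerivAt_cos θ).const_mul τ) (by fun_prop) (by fun_prop)
  have h1 : τ * Real.cos (Real.arccos (δ / τ)) = δ := by
    rw [Real.cos_arccos (by linarith [div_nonneg hδ hτ.le]) ((div_le_one hτ).2 hδτ)]
    field_simp
  simp only [h1, Real.cos_zero, mul_one] at h
  rw [intervalIntegral.integral_symm, ← h, ← intervalIntegral.integral_const_mul,
    ← intervalIntegral.integral_neg]
  apply intervalIntegral.integral_congr
  intro θ hθ
  rw [Set.uIcc_of_le (Real.arccos_nonneg _)] at hθ
  have hs : 0 ≤ Real.sin θ := Real.sin_nonneg_of_nonneg_of_le_pi hθ.1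
    (hθ.2.trans (Real.arccos_le_pi _))
  have : τ ^ 2 - (τ * Real.cos θ) ^ 2 = (τ * Real.sin θ) ^ 2 := by
    have := Real.sin_sq_add_cos_sq θ
    linear_combination (-τ^2) * this
  simp only [Function.comp, this]
  rw [Real.sqrt_sq (by positivity)]
  ring

theorem volume_spherical_cap {n : ℕ} (hn : 1 ≤ n) (δ τ : ℝ) (hτ : 0 < τ)
    (hδ : 0 ≤ δ) (hδτ : δ ≤ τ) :
    volume {x : EuclideanSpace ℝ (Fin n) | ‖x‖ ≤ τ ∧ δ ≤ x ⟨0, hn⟩} =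
      ENNReal.ofReal
        (Real.pi ^ (((n : ℝ) - 1) / 2) * τ ^ n / Real.Gamma (((n : ℝ) + 1) / 2) *
          ∫ θ in (0:ℝ)..(Real.arccos (δ / τ)), Real.sin θ ^ n) := by
  obtain ⟨m, rfl⟩ : ∃ m, n = m + 1 := ⟨n - 1, by omega⟩
  have hmeas : MeasurableSet {x : EuclideanSpace ℝ (Fin (m+1)) | ‖x‖ ≤ τ ∧ δ ≤ x ⟨0, hn⟩} := by
    apply IsClosed.measurableSet
    refine IsClosed.and ?_ ?_ <;> exact isClosed_le (by fun_prop) (by fun_prop)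
  rw [← (PiLp.volume_preserving_toLp (Fin (m+1))).measure_preimage hmeas.nullMeasurableSet]
  have hS : MeasurableSet {p : ℝ × (Fin m → ℝ) | p.1 ^ 2 + ∑ i, p.2 i ^ 2 ≤ τ ^ 2 ∧ δ ≤ p.1} := by
    apply IsClosed.measurableSet
    refine IsClosed.and ?_ ?_ <;> exact isClosed_le (by fun_prop) (by fun_prop)
  have e : (WithLp.toLp 2) ⁻¹' {x : EuclideanSpace ℝ (Fin (m+1)) | ‖x‖ ≤ τ ∧ δ ≤ x ⟨0, hn⟩} =
      (MeasurableEquiv.piFinSuccAbove (fun _ : Fin (m+1) => ℝ) 0) ⁻¹'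
        {p : ℝ × (Fin m → ℝ) | p.1 ^ 2 + ∑ i, p.2 i ^ 2 ≤ τ ^ 2 ∧ δ ≤ p.1} := by
    ext z
    simp [EuclideanSpace.norm_eq, Real.sqrt_le_left hτ.le, Fin.sum_univ_succ,
      MeasurableEquiv.piFinSuccAbove, Fin.insertNthEquiv, Fin.removeNth, Fin.tail]
  rw [e, (volume_preserving_piFinSuccAbove (fun _ : Fin (m+1) => ℝ) 0).measure_preimage
    hS.nullMeasurableSet, Measure.volume_eq_prod, Measure.prod_apply hS]
  set c : ℝ := Real.sqrt π ^ m / Real.Gamma ((m:ℝ) / 2 + 1) with hc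
  have hc0 : 0 ≤ c := by positivity
  have hsl : ∀ t : ℝ, volume (Prod.mk t ⁻¹'
      {p : ℝ × (Fin m → ℝ) | p.1 ^ 2 + ∑ i, p.2 i ^ 2 ≤ τ ^ 2 ∧ δ ≤ p.1}) =
      (Set.Icc δ τ).indicator
        (fun t => ENNReal.ofReal (Real.sqrt (τ ^ 2 - t ^ 2) ^ m * c)) t := by
    intro t
    by_cases ht : t ∈ Set.Icc δ τ
    · rw [Set.indicator_of_mem ht]
      have hnn : 0 ≤ τ ^ 2 - t ^ 2 := by nlinarith [ht.1, ht.2]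
      have := ball_slice m (Real.sqrt (τ ^ 2 - t ^ 2)) (Real.sqrt_nonneg _)

      rw [← this, Real.sq_sqrt hnn]
      congr 1
      ext z
      simp only [Set.mem_preimage, Set.mem_ofPred_eq, ht.1, and_true]
      constructor <;> intro h <;> linarith
    · rw [Set.indicator_of_notMem ht]
      convert measure_empty (μ := (volume : Measure (Fin m → ℝ)))
      ext z
      simp only [Set.mem_preimage, Set.mem_ofPred_eq, Set.mem_empty_iff_false, iff_false]
      rintro ⟨h1, h2⟩
      refine ht ⟨h2, ?_⟩
      have : 0 ≤ ∑ i, z i ^ 2 := Finset.sum_nonneg fun i _ => sq_nonneg _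
      exact le_of_sq_le_sq (by linarith) hτ.le
  simp_rw [hsl]
  rw [lintegral_indicator measurableSet_Icc, ← ofReal_integral_eq_lintegral_ofReal]
  · congr 1
    rw [integral_Icc_eq_integral_Ioc, ← intervalIntegral.integral_of_le hδτ,
      intervalIntegral.integral_mul_const, cap_integral m δ τ hτ hδ hδτ, hc]
    have h1 : Real.sqrt π ^ m = π ^ ((((m + 1 : ℕ) : ℝ) - 1) / 2) := by
      rw [Real.sqrt_eq_rpow, ← Real.rpow_natCast, ← Real.rpow_mul Real.pi_pos.le]
      congr 1
      push_cast
      ring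
    have h2 : (m : ℝ) / 2 + 1 = (((m + 1 : ℕ) : ℝ) + 1) / 2 := by push_cast; ring
    rw [h1, h2]
    ring
  · apply Continuous.integrableOn_Icc
    fun_prop
  · exact Filter.Eventually.of_forall fun t => by positivity
end
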